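/- arXiv:1608.05896 — 2 statements merged into one kernel-verified Lean document; each statement's English description precedes it below -/
import Mathlib

section
/- Convexity lemma for Minkowski norms: Let F be a Minkowski norm on a finite-dimensional real normed space V, and let u, v, w be F-unit vectors such that u is a nonnegative linear combination of v and w. Then ⟨u, w⟩_u^F ≥ ⟨v, w⟩_v^F, and equality holds if and only if u = v. -/
/-!
Write `H = F²` and `p_y = ½ DH(y)`. Differentiating the homogeneity relation `DH(t y) = t DH(y)` at
`t = 1` gives `⟨y, w⟩_y = p_y(w)` (`minkHess_self`), and Euler's identity gives `p_y(y) = F(y)²`.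

The key fact is the strict fundamental inequality `p_v(u) < 1` for distinct unit vectors `u`, `v`
(`half_fderiv_sq_lt_one`). If the segment from `v` to `u` avoids the origin, then `H` has positive second
derivative along it and equal values at its ends, so its derivative at `v` in direction `u - v` is
negative by Rolle's theorem. Otherwise `u` is a nonpositive multiple of `v` and `p_v(u) ≤ 0`.

Now let `u = a v + b w` with `u ≠ v`; then `b > 0`. Applying `p_v` gives `a + b p_v(w) < 1`, while
applying `p_u` gives `1 = a p_u(v) + b p_u(w) ≤ a + b p_u(w)`. Hence `p_v(w) < p_u(w)`.
-/

/-- One half of the second Fréchet derivative of `F²` at `y`, evaluated at `(u, w)`: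
the fundamental bilinear form `⟨u,w⟩_y^F` associated to a Minkowski norm. -/
noncomputable def minkHess {V : Type*} [NormedAddCommGroup V] [NormedSpace ℝ V]
    (F : V → ℝ) (y u w : V) : ℝ :=
  (1 / 2) * fderiv ℝ (fun z => fderiv ℝ (fun x => F x ^ 2) z) y u w

/-- `F` is a Minkowski norm on `V`. -/
structure IsMinkowskiNorm {V : Type*} [NormedAddCommGroup V] [NormedSpace ℝ V]
    (F : V → ℝ) : Prop where
  continuous : Continuous F
  nonneg : ∀ y : V, 0 ≤ F y
  pos : ∀ y : V, y ≠ 0 → 0 < F y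
  smooth : ContDiffOn ℝ (⊤ : ℕ∞) F {(0 : V)}ᶜ
  homog : ∀ l : ℝ, 0 ≤ l → ∀ y : V, F (l • y) = l * F y
  posdef : ∀ y : V, y ≠ 0 → ∀ u : V, u ≠ 0 → 0 < minkHess F y u u

namespace IsMinkowskiNorm

variable {V : Type*} [NormedAddCommGroup V] [NormedSpace ℝ V] {F : V → ℝ}

lemma contDiffAt_sq (hF : IsMinkowskiNorm F) {y : V} (hy : y ≠ 0) :
    ContDiffAt ℝ (⊤ : ℕ∞) (fun x => F x ^ 2) y :=
  (hF.smooth.contDiffAt (isOpen_compl_singleton.mem_nhds hy)).pow 2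

lemma hasFDerivAt_sq (hF : IsMinkowskiNorm F) {y : V} (hy : y ≠ 0) :
    HasFDerivAt (fun x => F x ^ 2) (fderiv ℝ (fun x => F x ^ 2) y) y :=
  ((hF.contDiffAt_sq hy).differentiableAt (by simp)).hasFDerivAt

lemma hasFDerivAt_fderiv_sq (hF : IsMinkowskiNorm F) {y : V} (hy : y ≠ 0) :
    HasFDerivAt (fun z => fderiv ℝ (fun x => F x ^ 2) z)
      (fderiv ℝ (fun z => fderiv ℝ (fun x => F x ^ 2) z) y) y :=
  (((hF.contDiffAt_sq hy).fderiv_right (m := 1) (by norm_cast)).differentiableAt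
    (by simp)).hasFDerivAt

lemma fderiv_sq_smul (hF : IsMinkowskiNorm F) {l : ℝ} (hl : 0 < l) {y : V} (hy : y ≠ 0) :
    fderiv ℝ (fun x => F x ^ 2) (l • y) = l • fderiv ℝ (fun x => F x ^ 2) y := by
  have h1 : (fun x => F (l • x) ^ 2) = fun x => l ^ 2 * F x ^ 2 := by
    funext x
    rw [hF.homog l hl.le x]
    ring
  have h2 : HasFDerivAt (fun x => F (l • x) ^ 2)
      ((fderiv ℝ (fun x => F x ^ 2) (l • y)).comp (l • ContinuousLinearMap.id ℝ V)) y :=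
    (hF.hasFDerivAt_sq (smul_ne_zero hl.ne' hy)).comp y ((hasFDerivAt_id y).const_smul l)
  rw [h1] at h2
  have h3 := h2.unique ((hF.hasFDerivAt_sq hy).const_mul (l ^ 2))
  ext w
  have h4 := congrArg (fun L : V →L[ℝ] ℝ => L w) h3
  simp only [ContinuousLinearMap.comp_smul, ContinuousLinearMap.comp_id,
    _root_.smul_apply, smul_eq_mul] at h4 ⊢
  exact mul_left_cancel₀ hl.ne' (by linarith)

/-- Euler's identity for the 2-homogeneous function `F²`. -/
lemma fderiv_sq_self (hF : IsMinkowskiNorm F) {y : V} (hy : y ≠ 0) :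
    fderiv ℝ (fun x => F x ^ 2) y y = 2 * F y ^ 2 := by
  have hγ : HasDerivAt (fun t : ℝ => t • y) y 1 := by
    simpa using (hasDerivAt_id (1 : ℝ)).smul_const y
  have h1 : HasDerivAt (fun t : ℝ => F (t • y) ^ 2) (fderiv ℝ (fun x => F x ^ 2) y y) 1 := by
    have h := hF.hasFDerivAt_sq hy
    exact HasFDerivAt.comp_hasDerivAt_of_eq 1 h hγ (by simp)
  have h2 : HasDerivAt (fun t : ℝ => t ^ 2 * F y ^ 2) (2 * F y ^ 2) 1 := by
    simpa using (hasDerivAt_pow 2 (1 : ℝ)).mul_const (F y ^ 2)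
  refine h1.unique (h2.congr_of_eventuallyEq ?_)
  filter_upwards [lt_mem_nhds (zero_lt_one' ℝ)] with t ht
  rw [hF.homog t ht.le y]
  ring

/-- Euler's identity for the 1-homogeneous map `y ↦ D(F²)(y)`. -/
lemma minkHess_self (hF : IsMinkowskiNorm F) {y : V} (hy : y ≠ 0) (w : V) :
    minkHess F y y w = (1 / 2) * fderiv ℝ (fun x => F x ^ 2) y w := by
  have hγ : HasDerivAt (fun t : ℝ => t • y) y 1 := by
    simpa using (hasDerivAt_id (1 : ℝ)).smul_const y
  have h1 : HasDerivAt (fun t : ℝ => fderiv ℝ (fun x => F x ^ 2) (t • y))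
      (fderiv ℝ (fun z => fderiv ℝ (fun x => F x ^ 2) z) y y) 1 := by
    have h := hF.hasFDerivAt_fderiv_sq hy
    exact HasFDerivAt.comp_hasDerivAt_of_eq 1 h hγ (by simp)
  have h2 : HasDerivAt (fun t : ℝ => t • fderiv ℝ (fun x => F x ^ 2) y)
      (fderiv ℝ (fun x => F x ^ 2) y) 1 := by
    simpa using (hasDerivAt_id (1 : ℝ)).smul_const (fderiv ℝ (fun x => F x ^ 2) y)
  have h3 : fderiv ℝ (fun z => fderiv ℝ (fun x => F x ^ 2) z) y y
      = fderiv ℝ (fun x => F x ^ 2) y := by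
    refine h1.unique (h2.congr_of_eventuallyEq ?_)
    filter_upwards [lt_mem_nhds (zero_lt_one' ℝ)] with t ht
    exact hF.fderiv_sq_smul ht hy
  rw [minkHess, h3]

lemma ne_zero_of_unit (hF : IsMinkowskiNorm F) {y : V} (hy : F y = 1) : y ≠ 0 := by
  rintro rfl
  have := hF.homog 0 le_rfl 0
  simp [hy] at this

/-- The case of the fundamental inequality where strict convexity of `F²` is available along the
whole segment from `v` to `u`. -/
lemma fderiv_sq_sub_neg (hF : IsMinkowskiNorm F) {u v : V} (hu : F u = 1) (hv : F v = 1)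
    (huv : u ≠ v) (hseg : ∀ t ∈ Set.Icc (0 : ℝ) 1, v + t • (u - v) ≠ 0) :
    fderiv ℝ (fun x => F x ^ 2) v (u - v) < 0 := by
  have hγ : ∀ t : ℝ, HasDerivAt (fun t : ℝ => v + t • (u - v)) (u - v) t := fun t => by
    simpa using ((hasDerivAt_id t).smul_const (u - v)).const_add v
  have hd1 : ∀ t ∈ Set.Icc (0 : ℝ) 1, HasDerivAt (fun t : ℝ => F (v + t • (u - v)) ^ 2)
      (fderiv ℝ (fun x => F x ^ 2) (v + t • (u - v)) (u - v)) t := by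
    intro t ht
    have h := hF.hasFDerivAt_sq (hseg t ht)
    exact HasFDerivAt.comp_hasDerivAt t h (hγ t)
  have hd2 : ∀ t ∈ Set.Icc (0 : ℝ) 1,
      HasDerivAt (fun t : ℝ => fderiv ℝ (fun x => F x ^ 2) (v + t • (u - v)) (u - v))
      (fderiv ℝ (fun z => fderiv ℝ (fun x => F x ^ 2) z) (v + t • (u - v)) (u - v) (u - v)) t := by
    intro t ht
    have h := (hF.hasFDerivAt_fderiv_sq (hseg t ht)).comp_hasDerivAt t (hγ t)
    simpa using h.clm_apply (hasDerivAt_const t (u - v))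
  have hmono : StrictMonoOn
      (fun t : ℝ => fderiv ℝ (fun x => F x ^ 2) (v + t • (u - v)) (u - v)) (Set.Icc 0 1) := by
    refine strictMonoOn_of_deriv_pos (convex_Icc 0 1)
      (fun t ht => (hd2 t ht).continuousAt.continuousWithinAt) fun t ht => ?_
    have ht' := interior_subset ht
    rw [(hd2 t ht').deriv]
    have := hF.posdef _ (hseg t ht') (u - v) (sub_ne_zero.mpr huv)
    rw [minkHess] at this
    linarith
  obtain ⟨c, hc, hc0⟩ := exists_hasDerivAt_eq_zero (zero_lt_one' ℝ)
    (fun t ht => (hd1 t ht).continuousAt.continuousWithinAt) (by simp [hu, hv])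
    (fun t ht => hd1 t (Set.Ioo_subset_Icc_self ht))
  have h := hmono (Set.left_mem_Icc.mpr zero_le_one) (Set.Ioo_subset_Icc_self hc) hc.1
  simp only [hc0] at h
  simpa using h

/-- The strict fundamental inequality for distinct unit vectors. -/
lemma half_fderiv_sq_lt_one (hF : IsMinkowskiNorm F) {u v : V} (hu : F u = 1) (hv : F v = 1)
    (huv : u ≠ v) : (1 / 2) * fderiv ℝ (fun x => F x ^ 2) v u < 1 := by
  have hself := hF.fderiv_sq_self (hF.ne_zero_of_unit hv)
  rw [hv] at hself
  by_cases hseg : ∀ t ∈ Set.Icc (0 : ℝ) 1, v + t • (u - v) ≠ 0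
  · have h := hF.fderiv_sq_sub_neg hu hv huv hseg
    rw [map_sub] at h
    linarith
  · push Not at hseg
    obtain ⟨t, ht, h0⟩ := hseg
    -- Applying `p_v` to `(1 - t) v + t u = 0` determines `p_v(u)`, which is nonpositive.
    have h := congrArg (fderiv ℝ (fun x => F x ^ 2) v) h0
    simp only [map_add, map_smul, map_sub, map_zero, smul_eq_mul, hself] at h
    by_contra hcon
    push Not at hcon
    nlinarith [ht.1, ht.2]

end IsMinkowskiNorm

/-- Convexity lemma for Minkowski norms. -/
theorem convexity_lemma
    {V : Type*} [NormedAddCommGroup V] [NormedSpace ℝ V] [FiniteDimensional ℝ V]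
    (F : V → ℝ) (hF : IsMinkowskiNorm F)
    (u v w : V) (hu : F u = 1) (hv : F v = 1) (hw : F w = 1)
    (hcomb : ∃ a b : ℝ, 0 ≤ a ∧ 0 ≤ b ∧ u = a • v + b • w) :
    minkHess F v v w ≤ minkHess F u u w ∧
      (minkHess F u u w = minkHess F v v w ↔ u = v) := by
  by_cases huv : u = v
  · subst huv
    simp
  suffices h : minkHess F v v w < minkHess F u u w from
    ⟨h.le, fun he => absurd he h.ne', fun he => absurd he huv⟩
  obtain ⟨a, b, ha, hb, hab⟩ := hcomb
  have hu0 := hF.ne_zero_of_unit hu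
  have hv0 := hF.ne_zero_of_unit hv
  rw [hF.minkHess_self hu0, hF.minkHess_self hv0]
  have hvu := hF.half_fderiv_sq_lt_one hu hv huv
  have huv' := hF.half_fderiv_sq_lt_one hv hu (Ne.symm huv)
  have hself := hF.fderiv_sq_self hu0
  have h1 : fderiv ℝ (fun x => F x ^ 2) v u = a * 2 + b * fderiv ℝ (fun x => F x ^ 2) v w := by
    have hs := hF.fderiv_sq_self hv0
    rw [hv] at hs
    conv_lhs => rw [hab]
    simp [hs]
  have h2 : fderiv ℝ (fun x => F x ^ 2) u u
      = a * fderiv ℝ (fun x => F x ^ 2) u v + b * fderiv ℝ (fun x => F x ^ 2) u w := by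
    conv_lhs => rw [show ∀ L : V →L[ℝ] ℝ, L u = a * L v + b * L w from
      fun L => by conv_lhs => rw [hab, map_add, map_smul, map_smul, smul_eq_mul, smul_eq_mul]]
  rw [hself, hu] at h2
  rw [h1] at hvu
  by_contra hcon
  push Not at hcon
  nlinarith [mul_le_mul_of_nonneg_left huv'.le ha, mul_le_mul_of_nonneg_left hcon hb]
end

section
/- Injectivity of the Legendre transformation on the indicatrix: Let F be a Minkowski norm on a finite-dimensional real normed space V, and let u and v be F-unit vectors. If the linear functionals w ↦ ⟨u, w⟩_u^F and w ↦ ⟨v, w⟩_v^F on V are equal, then u = v. -/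
section Euler

variable {V : Type*} [NormedAddCommGroup V] [NormedSpace ℝ V] {F : V → ℝ}

lemma IsMinkowskiNorm.contDiffAt_sq_s11 (hF : IsMinkowskiNorm F) {y : V} (hy : y ≠ 0) :
    ContDiffAt ℝ (⊤ : ℕ∞) (fun x => F x ^ 2) y :=
  (hF.smooth.contDiffAt (isOpen_compl_singleton.mem_nhds hy)).pow 2

lemma IsMinkowskiNorm.hasFDerivAt_sq_s11 (hF : IsMinkowskiNorm F) {y : V} (hy : y ≠ 0) :
    HasFDerivAt (fun x => F x ^ 2) (fderiv ℝ (fun x => F x ^ 2) y) y :=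
  ((hF.contDiffAt_sq_s11 hy).differentiableAt (by simp)).hasFDerivAt

lemma IsMinkowskiNorm.hasFDerivAt_fderiv_sq_s11 (hF : IsMinkowskiNorm F) {y : V} (hy : y ≠ 0) :
    HasFDerivAt (fun z => fderiv ℝ (fun x => F x ^ 2) z)
      (fderiv ℝ (fun z => fderiv ℝ (fun x => F x ^ 2) z) y) y :=
  (((hF.contDiffAt_sq_s11 hy).fderiv_right (m := 1) (by norm_cast)).differentiableAt
    (by simp)).hasFDerivAt

lemma hasDerivAt_smul_const_one (y : V) : HasDerivAt (fun l : ℝ => l • y) y 1 := by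
  simpa using (hasDerivAt_id (1 : ℝ)).smul_const y

/-- Euler's relation for `F²`, which is positively homogeneous of degree 2. -/
lemma IsMinkowskiNorm.fderiv_sq_self_s11 (hF : IsMinkowskiNorm F) {y : V} (hy : y ≠ 0) :
    fderiv ℝ (fun x => F x ^ 2) y y = 2 * F y ^ 2 := by
  have h1 : HasDerivAt (fun l : ℝ => F (l • y) ^ 2) (fderiv ℝ (fun x => F x ^ 2) y y) 1 := by
    have h := hF.hasFDerivAt_sq_s11 hy
    exact HasFDerivAt.comp_hasDerivAt_of_eq (1 : ℝ) h (hasDerivAt_smul_const_one y) (by simp)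
  have h2 : HasDerivAt (fun l : ℝ => l ^ 2 * F y ^ 2) (2 * F y ^ 2) 1 := by
    simpa using (hasDerivAt_pow 2 (1 : ℝ)).mul_const (F y ^ 2)
  refine h1.unique (h2.congr_of_eventuallyEq ?_)
  filter_upwards [lt_mem_nhds (zero_lt_one' ℝ)] with l hl
  rw [hF.homog l hl.le, mul_pow]

lemma IsMinkowskiNorm.fderiv_sq_smul_s11 (hF : IsMinkowskiNorm F) {y : V} (hy : y ≠ 0)
    {l : ℝ} (hl : 0 < l) :
    fderiv ℝ (fun x => F x ^ 2) (l • y) = l • fderiv ℝ (fun x => F x ^ 2) y := by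
  have h1 : HasFDerivAt (fun x => F (l • x) ^ 2)
      ((fderiv ℝ (fun x => F x ^ 2) (l • y)).comp (l • ContinuousLinearMap.id ℝ V)) y :=
    HasFDerivAt.comp (f := fun x : V => l • x) y (hF.hasFDerivAt_sq_s11 (smul_ne_zero hl.ne' hy))
      ((hasFDerivAt_id y).const_smul l)
  have h2 : HasFDerivAt (fun x => F (l • x) ^ 2) (l ^ 2 • fderiv ℝ (fun x => F x ^ 2) y) y := by
    have h : (fun x => F (l • x) ^ 2) = fun x => l ^ 2 • F x ^ 2 := by
      funext x
      rw [hF.homog l hl.le, mul_pow, smul_eq_mul]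
    rw [h]
    exact (hF.hasFDerivAt_sq_s11 hy).const_smul (l ^ 2)
  ext w
  have h3 := DFunLike.congr_fun (h1.unique h2) w
  simp only [ContinuousLinearMap.comp_apply, smul_apply,
    ContinuousLinearMap.id_apply, map_smul, smul_eq_mul] at h3 ⊢
  exact mul_left_cancel₀ hl.ne' (by rw [h3]; ring)

/-- Euler's relation for `D(F²)`, which is positively homogeneous of degree 1: the Legendre
transformation `y ↦ ⟨y, ·⟩_y` is one half of `D(F²)`. -/
lemma IsMinkowskiNorm.minkHess_self_s11 (hF : IsMinkowskiNorm F) {y : V} (hy : y ≠ 0) (w : V) :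
    minkHess F y y w = (1 / 2) * fderiv ℝ (fun x => F x ^ 2) y w := by
  have h1 : HasDerivAt (fun l : ℝ => fderiv ℝ (fun x => F x ^ 2) (l • y))
      (fderiv ℝ (fun z => fderiv ℝ (fun x => F x ^ 2) z) y y) 1 :=
    HasFDerivAt.comp_hasDerivAt_of_eq (1 : ℝ) (hF.hasFDerivAt_fderiv_sq_s11 hy)
      (hasDerivAt_smul_const_one y) (by simp)
  have h2 := hasDerivAt_smul_const_one (fderiv ℝ (fun x => F x ^ 2) y)
  have h3 := h1.unique (h2.congr_of_eventuallyEq (by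
    filter_upwards [lt_mem_nhds (zero_lt_one' ℝ)] with l hl
    exact hF.fderiv_sq_smul_s11 hy hl))
  rw [minkHess, h3]

lemma IsMinkowskiNorm.ne_zero_of_unit_s11 (hF : IsMinkowskiNorm F) {y : V} (hy : F y = 1) :
    y ≠ 0 := by
  rintro rfl
  have h := hF.homog 0 le_rfl 0
  simp [hy] at h

end Euler

/-- Injectivity of the Legendre transformation on the indicatrix. -/
theorem legendre_injective_on_indicatrix
    {V : Type*} [NormedAddCommGroup V] [NormedSpace ℝ V] [FiniteDimensional ℝ V]
    (F : V → ℝ) (hF : IsMinkowskiNorm F)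
    (u v : V) (hu : F u = 1) (hv : F v = 1)
    (h : ∀ w : V, minkHess F u u w = minkHess F v v w) :
    u = v := by
  have hu0 := hF.ne_zero_of_unit_s11 hu
  have hv0 := hF.ne_zero_of_unit_s11 hv
  have hD : ∀ w, fderiv ℝ (fun x => F x ^ 2) u w = fderiv ℝ (fun x => F x ^ 2) v w := by
    intro w
    have := h w
    rw [hF.minkHess_self_s11 hu0, hF.minkHess_self_s11 hv0] at this
    linarith
  have hlu : fderiv ℝ (fun x => F x ^ 2) u u = 2 := by simp [hF.fderiv_sq_self_s11 hu0, hu]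
  have hlv : fderiv ℝ (fun x => F x ^ 2) u v = 2 := by simp [hD, hF.fderiv_sq_self_s11 hv0, hv]
  -- The functional `D(F²)(u)` is constantly `2` on the line through `u` and `v`.
  have hseg : ∀ t : ℝ, u + t • (v - u) ≠ 0 := by
    intro t ht
    have := congrArg (fderiv ℝ (fun x => F x ^ 2) u) ht
    simp [hlu, hlv] at this
  by_contra huv
  have hvu : v - u ≠ 0 := sub_ne_zero.mpr (Ne.symm huv)
  have hder : ∀ t : ℝ, HasDerivAt
      (fun t : ℝ => fderiv ℝ (fun x => F x ^ 2) (u + t • (v - u)) (v - u))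
      (2 * minkHess F (u + t • (v - u)) (v - u) (v - u)) t := by
    intro t
    have hline : HasDerivAt (fun t : ℝ => u + t • (v - u)) (v - u) t := by
      simpa using ((hasDerivAt_id t).smul_const (v - u)).const_add u
    have h1 := HasFDerivAt.comp_hasDerivAt t (hF.hasFDerivAt_fderiv_sq_s11 (hseg t)) hline
    have h2 := h1.clm_apply (hasDerivAt_const t (v - u))
    refine h2.congr_deriv ?_
    rw [minkHess, map_zero, add_zero]
    ring
  have hmono := strictMono_of_hasDerivAt_pos hder
    (fun t => mul_pos two_pos (hF.posdef _ (hseg t) _ hvu))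
  have hlt := hmono (zero_lt_one' ℝ)
  simp only [zero_smul, add_zero, one_smul, add_sub_cancel] at hlt
  exact hlt.ne (hD _)
end
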